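/- arXiv:1304.4000 — 6 statements merged into one kernel-verified Lean document; each statement's English description precedes it below -/
import Mathlib

section
/- Let p > 2 and w(s) = (cosh s)^{-2/(p-2)}. Then w is a positive solution of -(p-2)² w'' + 4 w - 2 p w^{p-1} = 0 on ℝ, and moreover, if v : ℝ → ℝ is a positive, twice continuously differentiable solution of -(p-2)² v'' + 4 v - 2 p v^{p-1} = 0 with v(s) → 0 as |s| → ∞, then there exists s₀ ∈ ℝ such that v(s) = w(s - s₀) for all s ∈ ℝ. -/
/-!
For `r = 1 - p / 2` the substitution `u = v ^ r` linearizes the equation. The equation conserves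
`(p - 2)² v'² - 4 v² + 4 v ^ p`, and decay at `+∞` forces this energy to vanish, since `v'` tends
to `0` along some sequence by the mean value theorem. At zero energy `u` satisfies `u'' = u` and
`u'² = u² - 1`. Hence `u + u'` and `u - u'` are multiples of `eˢ` and `e⁻ˢ` with product `1`, so the
positive function `u` is a translate of `cosh`.
-/

open Filter Real Topology

theorem exists_seq_tendsto_deriv_zero {f : ℝ → ℝ} {a : ℝ} (hf : Differentiable ℝ f)
    (hlim : Tendsto f atTop (𝓝 a)) :
    ∃ x : ℕ → ℝ, Tendsto x atTop atTop ∧ Tendsto (fun n => deriv f (x n)) atTop (𝓝 0) := by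
  have hslope (n : ℕ) : ∃ x : ℝ, (n : ℝ) < x ∧ deriv f x = f (n + 1) - f n := by
    obtain ⟨x, hx, hfx⟩ := exists_deriv_eq_slope f (lt_add_one (n : ℝ))
      hf.continuous.continuousOn hf.differentiableOn
    exact ⟨x, hx.1, by simpa using hfx⟩
  choose x hx hfx using hslope
  refine ⟨x, tendsto_atTop_mono (fun n => (hx n).le) tendsto_natCast_atTop_atTop, ?_⟩
  have hn : Tendsto (fun n : ℕ => f n) atTop (𝓝 a) := hlim.comp tendsto_natCast_atTop_atTop
  have hn_succ : Tendsto (fun n : ℕ => f (n + 1)) atTop (𝓝 a) :=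
    hlim.comp (tendsto_atTop_add_const_right _ 1 tendsto_natCast_atTop_atTop)
  simpa only [hfx, sub_self] using hn_succ.sub hn

theorem hasDerivAt_deriv_rpow {f f' : ℝ → ℝ} {f'' s : ℝ} (r : ℝ) (hf : HasDerivAt f (f' s) s)
    (hf' : HasDerivAt f' f'' s) (hs : f s ≠ 0) :
    HasDerivAt (fun t => f' t * r * f t ^ (r - 1))
      (r * f s ^ (r - 2) * (f s * f'' + (r - 1) * f' s ^ 2)) s := by
  have hpow : f s ^ (r - 1) = f s ^ (r - 2) * f s := by
    rw [← rpow_add_one hs]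
    ring_nf
  have hpow' : f s ^ (r - 1 - 1) = f s ^ (r - 2) := by ring_nf
  refine ((hf'.mul_const r).mul (hf.rpow_const (p := r - 1) (.inl hs))).congr_deriv ?_
  rw [hpow', hpow]
  ring

theorem deriv_cosh_rpow (r : ℝ) :
    deriv (fun s => cosh s ^ r) = fun s => sinh s * r * cosh s ^ (r - 1) :=
  funext fun s => ((hasDerivAt_cosh s).rpow_const (.inl (cosh_pos s).ne')).deriv

theorem hasDerivAt_deriv_cosh_rpow (r s : ℝ) :
    HasDerivAt (deriv fun t => cosh t ^ r)
      (r ^ 2 * cosh s ^ r - r * (r - 1) * cosh s ^ (r - 2)) s := by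
  have hpow : cosh s ^ r = cosh s ^ (r - 2) * cosh s ^ 2 := by
    rw [← rpow_add_natCast (cosh_pos s).ne']
    norm_num
  rw [deriv_cosh_rpow]
  refine (hasDerivAt_deriv_rpow r (hasDerivAt_cosh s) (hasDerivAt_sinh s)
    (cosh_pos s).ne').congr_deriv ?_
  rw [hpow, sinh_sq]
  ring

theorem eq_mul_exp_of_hasDerivAt {y : ℝ → ℝ} {c : ℝ} (hy : ∀ s, HasDerivAt y (c * y s) s) (s : ℝ) :
    y s = y 0 * exp (c * s) := by
  have hconst (t : ℝ) : HasDerivAt (fun t => y t * exp (-(c * t))) 0 t := by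
    refine ((hy t).mul ((hasDerivAt_id t).const_mul c).neg.exp).congr_deriv ?_
    simp only [id_eq]
    ring
  have h := is_const_of_deriv_eq_zero (fun t => (hconst t).differentiableAt)
    (fun t => (hconst t).deriv) s 0
  simp only [mul_zero, neg_zero, exp_zero, mul_one] at h
  rw [← h, mul_assoc, ← exp_add, neg_add_cancel, exp_zero, mul_one]

theorem exists_eq_cosh_sub {u u' : ℝ → ℝ} (hu : ∀ s, HasDerivAt u (u' s) s)
    (hu' : ∀ s, HasDerivAt u' (u s) s) (hsq : u' 0 ^ 2 = u 0 ^ 2 - 1) (hpos : 0 < u 0) :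
    ∃ s₀, ∀ s, u s = cosh (s - s₀) := by
  have hadd (s : ℝ) : u s + u' s = (u 0 + u' 0) * exp s := by
    simpa using eq_mul_exp_of_hasDerivAt (y := u + u') (c := 1)
      (fun t => ((hu t).add (hu' t)).congr_deriv (by simp [add_comm])) s
  have hsub (s : ℝ) : u s - u' s = (u 0 - u' 0) * exp (-s) := by
    simpa using eq_mul_exp_of_hasDerivAt (y := u - u') (c := -1)
      (fun t => ((hu t).sub (hu' t)).congr_deriv (by simp)) s
  have hadd_pos : 0 < u 0 + u' 0 := by
    linarith [(abs_lt_of_sq_lt_sq' (by linarith : u' 0 ^ 2 < u 0 ^ 2) hpos.le).1]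
  have hsub_eq_inv : u 0 - u' 0 = (u 0 + u' 0)⁻¹ :=
    eq_inv_of_mul_eq_one_left (by linear_combination -hsq)
  refine ⟨-log (u 0 + u' 0), fun s => ?_⟩
  have hexp : exp (s - -log (u 0 + u' 0)) = u s + u' s := by
    rw [sub_neg_eq_add, exp_add, exp_log hadd_pos, hadd s, mul_comm]
  have hexp_neg : exp (-(s - -log (u 0 + u' 0))) = u s - u' s := by
    rw [neg_sub, sub_eq_add_neg, exp_add, exp_neg (log _), exp_log hadd_pos, hsub s, hsub_eq_inv]
  rw [cosh_eq, hexp, hexp_neg]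
  ring

/-- Positive, twice differentiable solutions of `-(p - 2)² v'' + 4 v - 2 p v ^ (p - 1) = 0` on the
whole line. -/
structure IsPositiveSolution (p : ℝ) (v : ℝ → ℝ) : Prop where
  differentiable : Differentiable ℝ v
  differentiable_deriv : Differentiable ℝ (deriv v)
  pos : ∀ s, 0 < v s
  equation : ∀ s, -(p - 2) ^ 2 * deriv (deriv v) s + 4 * v s - 2 * p * v s ^ (p - 1) = 0

/-- The first integral of `-(p - 2)² v'' + 4 v - 2 p v ^ (p - 1) = 0` obtained on multiplying the
equation by `-2 v'`, normalized to vanish for `v = v' = 0` when `p ≠ 0`. -/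
noncomputable def energy (p : ℝ) (v : ℝ → ℝ) (s : ℝ) : ℝ :=
  (p - 2) ^ 2 * deriv v s ^ 2 - 4 * v s ^ 2 + 4 * v s ^ p

theorem tendsto_energy_zero {p : ℝ} {v : ℝ → ℝ} {l : Filter ℝ} (hp : 0 < p)
    (hv : Tendsto v l (𝓝 0)) (hv' : Tendsto (deriv v) l (𝓝 0)) :
    Tendsto (energy p v) l (𝓝 0) := by
  have hpow : Tendsto (fun s => v s ^ p) l (𝓝 0) := by
    simpa only [zero_rpow hp.ne'] using hv.rpow_const (.inr hp.le)
  unfold energy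
  simpa using
    (((hv'.pow 2).const_mul ((p - 2) ^ 2)).sub ((hv.pow 2).const_mul 4)).add (hpow.const_mul 4)

theorem isPositiveSolution_cosh_rpow {p : ℝ} (hp : p ≠ 2) :
    IsPositiveSolution p fun s => cosh s ^ (-(2 / (p - 2))) where
  differentiable s :=
    ((hasDerivAt_cosh s).rpow_const (.inl (cosh_pos s).ne')).differentiableAt
  differentiable_deriv s := (hasDerivAt_deriv_cosh_rpow _ s).differentiableAt
  pos s := rpow_pos_of_pos (cosh_pos s) _
  equation s := by
    have hp' : p - 2 ≠ 0 := sub_ne_zero.mpr hp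
    have hpow : (cosh s ^ (-(2 / (p - 2)))) ^ (p - 1) = cosh s ^ (-(2 / (p - 2)) - 2) := by
      rw [← rpow_mul (cosh_pos s).le]
      congr 1
      field_simp
      ring
    rw [(hasDerivAt_deriv_cosh_rpow _ s).deriv, hpow]
    field_simp
    ring

namespace IsPositiveSolution

variable {p : ℝ} {v : ℝ → ℝ}

theorem energy_eq_energy (h : IsPositiveSolution p v) (s t : ℝ) : energy p v s = energy p v t := by
  have hderiv (x : ℝ) : HasDerivAt (energy p v) 0 x := by
    have hv := (h.differentiable x).hasDerivAt
    have hv' := (h.differentiable_deriv x).hasDerivAt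
    refine ((((hv'.pow 2).const_mul ((p - 2) ^ 2)).sub ((hv.pow 2).const_mul 4)).add
      ((hv.rpow_const (p := p) (.inl (h.pos x).ne')).const_mul 4)).congr_deriv ?_
    simp only [Nat.cast_ofNat, Nat.add_one_sub_one, pow_one]
    linear_combination (-(2 * deriv v x)) * h.equation x
  exact is_const_of_deriv_eq_zero (fun x => (hderiv x).differentiableAt)
    (fun x => (hderiv x).deriv) s t

theorem energy_eq_zero (h : IsPositiveSolution p v) (hp : 0 < p) (hlim : Tendsto v atTop (𝓝 0))
    (s : ℝ) : energy p v s = 0 := by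
  obtain ⟨x, hx, hx'⟩ := exists_seq_tendsto_deriv_zero h.differentiable hlim
  have henergy : Tendsto (energy p v) (map x atTop) (𝓝 0) :=
    tendsto_energy_zero hp (hlim.mono_left hx) (tendsto_map'_iff.mpr hx')
  exact tendsto_nhds_unique
    (tendsto_const_nhds.congr fun t => h.energy_eq_energy s t) henergy

theorem sq_deriv_rpow_of_energy_eq_zero (h : IsPositiveSolution p v) {s : ℝ}
    (hE : energy p v s = 0) :
    (deriv v s * (1 - p / 2) * v s ^ (1 - p / 2 - 1)) ^ 2 = (v s ^ (1 - p / 2)) ^ 2 - 1 := by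
  have hpow : v s ^ (1 - p / 2) = v s ^ (1 - p / 2 - 1) * v s := by
    rw [← rpow_add_one (h.pos s).ne', sub_add_cancel]
  have hpow_sq : (v s ^ (1 - p / 2 - 1)) ^ 2 * v s ^ p = 1 := by
    rw [← rpow_mul_natCast (h.pos s).le, ← rpow_add (h.pos s), ← rpow_zero (v s)]
    congr 1
    push_cast
    ring
  rw [energy] at hE
  rw [hpow]
  linear_combination (v s ^ (1 - p / 2 - 1)) ^ 2 / 4 * hE - hpow_sq

theorem hasDerivAt_deriv_rpow_of_energy_eq_zero (h : IsPositiveSolution p v) (hp : p ≠ 2) {s : ℝ}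
    (hE : energy p v s = 0) :
    HasDerivAt (fun t => deriv v t * (1 - p / 2) * v t ^ (1 - p / 2 - 1))
      (v s ^ (1 - p / 2)) s := by
  have hr : 1 - p / 2 ≠ 0 := fun hr => hp (by linarith)
  have hpow : v s ^ (1 - p / 2) = v s ^ (1 - p / 2 - 2) * v s ^ 2 := by
    rw [← rpow_add_natCast (h.pos s).ne']
    norm_num
  have hpow_p : v s ^ p = v s ^ (p - 1) * v s := by
    rw [← rpow_add_one (h.pos s).ne', sub_add_cancel]
  have hlin : (1 - p / 2) * (v s * deriv (deriv v) s + (1 - p / 2 - 1) * deriv v s ^ 2)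
      = v s ^ 2 := by
    rw [energy, hpow_p] at hE
    refine mul_left_cancel₀ hr ?_
    linear_combination -(v s / 4) * h.equation s - p / 8 * hE
  refine (hasDerivAt_deriv_rpow (1 - p / 2) (h.differentiable s).hasDerivAt
    (h.differentiable_deriv s).hasDerivAt (h.pos s).ne').congr_deriv ?_
  rw [hpow, ← hlin]
  ring

theorem exists_eq_cosh_sub_rpow_of_energy_eq_zero (h : IsPositiveSolution p v) (hp : p ≠ 2)
    (hE : ∀ s, energy p v s = 0) :
    ∃ s₀, ∀ s, v s = cosh (s - s₀) ^ (-(2 / (p - 2))) := by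
  obtain ⟨s₀, hs₀⟩ := exists_eq_cosh_sub
    (fun s => (h.differentiable s).hasDerivAt.rpow_const (.inl (h.pos s).ne'))
    (fun s => h.hasDerivAt_deriv_rpow_of_energy_eq_zero hp (hE s))
    (h.sq_deriv_rpow_of_energy_eq_zero (hE 0)) (rpow_pos_of_pos (h.pos 0) _)
  refine ⟨s₀, fun s => ?_⟩
  have hp' : p - 2 ≠ 0 := sub_ne_zero.mpr hp
  have hexponent : (1 - p / 2) * -(2 / (p - 2)) = 1 := by
    field_simp
    ring
  rw [← hs₀, ← rpow_mul (h.pos s).le, hexponent, rpow_one]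

end IsPositiveSolution

theorem statement2_general {p : ℝ} (hp₀ : 0 < p) (hp₂ : p ≠ 2) :
    IsPositiveSolution p (fun s => cosh s ^ (-(2 / (p - 2)))) ∧
    ∀ v : ℝ → ℝ, IsPositiveSolution p v → Tendsto v atTop (𝓝 0) →
      ∃ s₀ : ℝ, ∀ s, v s = cosh (s - s₀) ^ (-(2 / (p - 2))) :=
  ⟨isPositiveSolution_cosh_rpow hp₂, fun _ hv hlim =>
    hv.exists_eq_cosh_sub_rpow_of_energy_eq_zero hp₂ (hv.energy_eq_zero hp₀ hlim)⟩

/-- For `p > 2`, `w(s) = (cosh s)^{-2/(p-2)}` is a positive solution of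
`-(p-2)² w'' + 4 w - 2p w^{p-1} = 0` on `ℝ`, and every positive `C²` solution tending to `0`
at infinity is a translate of `w`. -/
theorem statement2 (p : ℝ) (hp : 2 < p)
    (w : ℝ → ℝ) (hw : ∀ s, w s = Real.cosh s ^ (-(2 / (p - 2)))) :
    (∀ s, 0 < w s) ∧
    (∀ s, -(p - 2) ^ 2 * deriv (deriv w) s + 4 * w s - 2 * p * w s ^ (p - 1) = 0) ∧
    (∀ v : ℝ → ℝ, ContDiff ℝ 2 v → (∀ s, 0 < v s) →
      (∀ s, -(p - 2) ^ 2 * deriv (deriv v) s + 4 * v s - 2 * p * v s ^ (p - 1) = 0) →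
      Filter.Tendsto v (Filter.cocompact ℝ) (nhds 0) →
      ∃ s₀ : ℝ, ∀ s, v s = w (s - s₀)) := by
  obtain rfl : w = fun s => cosh s ^ (-(2 / (p - 2))) := funext hw
  obtain ⟨hsol, huniq⟩ := statement2_general (by linarith) hp.ne'
  exact ⟨hsol.pos, hsol.equation, fun v hC hpos heq hlim => huniq v
    ⟨hC.differentiable two_ne_zero, hC.differentiable_deriv_two, hpos, heq⟩
    (hlim.mono_left atTop_le_cocompact)⟩
end

section
/- Let p > 2, θ ∈ (0,1] with (2θ-1)p + 2 > 0, and Λ > 0. Set η = (p+2)θΛ/((2θ-1)p+2), A = (p η/2)^{1/(p-2)}, B = ((p-2)/2)√(η/θ), and u_*(s) = A (cosh(B s))^{-2/(p-2)}. Then: (i) t := (∫_ℝ |u_*'|² ds)/(∫_ℝ u_*² ds) = (p-2)Λ/((2θ-1)p+2); (ii) (∫_ℝ u_*^p ds)/(∫_ℝ u_*² ds) = 2 p η/(p+2); and (iii) u_* solves -θ u_*'' + ((1-θ) t + Λ) u_* = u_*^{p-1} on ℝ. -/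
open MeasureTheory

/-! Up to scaling, `u_*` is the power `w = cosh ^ (-2 / (p - 2))`. As `w ^ (p - 2) = 1 - tanh ^ 2`,
it satisfies `w' ^ 2 = a ^ 2 * (w ^ 2 - w ^ p)` and `w'' = a ^ 2 * (w - p / 2 * w ^ (p - 1))` with
`a = 2 / (p - 2)`. Since `w * w'` is integrable, the integral of `(w * w')' = w' ^ 2 + w * w''`
vanishes, which determines `∫ w ^ p / ∫ w ^ 2`; integrating the first identity then gives
`∫ w' ^ 2 / ∫ w ^ 2`. The constants `A` and `B` are those for which `u_*` solves the rescaled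
equation `-θ * u'' + η * u = u ^ (p - 1)`, and `η` is the value of `(1 - θ) * t + Λ`. -/

section

open Real Filter Asymptotics

lemma hasDerivAt_tanh (s : ℝ) : HasDerivAt tanh (1 - tanh s ^ 2) s := by
  have hcosh := (cosh_pos s).ne'
  have h := (hasDerivAt_sinh s).div (hasDerivAt_cosh s) hcosh
  rw [show tanh = sinh / cosh from funext tanh_eq_sinh_div_cosh]
  refine h.congr_deriv ?_
  rw [Pi.div_apply]
  field_simp

lemma integrable_cosh_rpow_neg {b : ℝ} (hb : 0 < b) :
    Integrable fun s : ℝ => cosh s ^ (-b) := by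
  have hcont : Continuous fun s : ℝ => cosh s ^ (-b) :=
    continuous_cosh.rpow_const fun s => .inl (cosh_pos s).ne'
  have hbound (s : ℝ) : ‖cosh s ^ (-b)‖ ≤ 2 ^ b * ‖exp (-b * s)‖ := by
    have hexp : exp s / 2 ≤ cosh s := by
      rw [cosh_eq]
      linarith [exp_pos (-s)]
    rw [norm_of_nonneg (rpow_nonneg (cosh_pos s).le _), norm_of_nonneg (exp_pos _).le]
    calc cosh s ^ (-b) ≤ (exp s / 2) ^ (-b) :=
          rpow_le_rpow_of_nonpos (by positivity) hexp (by linarith)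
      _ = 2 ^ b * exp (-b * s) := by
          rw [div_rpow (exp_pos s).le zero_le_two, ← exp_mul, rpow_neg zero_le_two, div_inv_eq_mul,
            mul_comm, mul_comm s]
  exact hcont.locallyIntegrable.integrable_of_isBigO_atTop_of_norm_isNegInvariant
    (.of_forall fun s => by simp only [Function.comp_apply, cosh_neg])
    (.of_bound _ (.of_forall hbound)) ⟨Set.Ioi 0, Ioi_mem_atTop 0, exp_neg_integrableOn_Ioi 0 hb⟩

section Rescaling

lemma integral_sq_rescale (A B : ℝ) (f : ℝ → ℝ) :
    ∫ s, (A * f (B * s)) ^ 2 = A ^ 2 * |B⁻¹| * ∫ s, f s ^ 2 := by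
  simp only [mul_pow, integral_const_mul, Measure.integral_comp_mul_left (fun s => f s ^ 2),
    smul_eq_mul, mul_assoc]

lemma deriv_rescale (A B : ℝ) (f : ℝ → ℝ) :
    deriv (fun s => A * f (B * s)) = fun s => A * B * deriv f (B * s) := by
  funext s
  rw [deriv_const_mul_field, deriv_comp_mul_left, smul_eq_mul, mul_assoc]

lemma integral_deriv_sq_div_integral_sq_rescale {A B : ℝ} (hA : A ≠ 0) (hB : B ≠ 0) (f : ℝ → ℝ) :
    (∫ s, deriv (fun s => A * f (B * s)) s ^ 2) / ∫ s, (A * f (B * s)) ^ 2 =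
      B ^ 2 * ((∫ s, deriv f s ^ 2) / ∫ s, f s ^ 2) := by
  rw [deriv_rescale, integral_sq_rescale, integral_sq_rescale]
  field_simp

lemma integral_rpow_div_integral_sq_rescale {A B : ℝ} (hA : 0 < A) (hB : B ≠ 0) {f : ℝ → ℝ}
    (hf : ∀ s, 0 ≤ f s) (p : ℝ) :
    (∫ s, (A * f (B * s)) ^ p) / ∫ s, (A * f (B * s)) ^ 2 =
      A ^ (p - 2) * ((∫ s, f s ^ p) / ∫ s, f s ^ 2) := by
  have hpow : A ^ p = A ^ (p - 2) * A ^ 2 := by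
    rw [← rpow_two, ← rpow_add hA, sub_add_cancel]
  simp only [integral_sq_rescale, mul_rpow hA.le (hf _), integral_const_mul,
    Measure.integral_comp_mul_left (fun s => f s ^ p), smul_eq_mul]
  rw [hpow]
  field_simp

end Rescaling

/-- The profile `w = cosh ^ (-2 / (p - 2))` of the solitary wave with nonlinearity `u ^ (p - 1)`. -/
noncomputable def solitonProfile (p s : ℝ) : ℝ :=
  cosh s ^ (-(2 / (p - 2)))

/-- The solitary wave solving `-θ * u'' + η * u = u ^ (p - 1)` for `p > 2` and `θ, η > 0`, obtained
from `solitonProfile p` by the amplitude and the dilation that this equation forces. -/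
noncomputable def solitaryWave (p θ η s : ℝ) : ℝ :=
  (p * η / 2) ^ (1 / (p - 2)) * solitonProfile p ((p - 2) / 2 * √(η / θ) * s)

section Profile

variable {p : ℝ}

lemma solitonProfile_pos (p s : ℝ) : 0 < solitonProfile p s :=
  rpow_pos_of_pos (cosh_pos s) _

lemma solitonProfile_rpow_sub_two (hp : p ≠ 2) (s : ℝ) :
    solitonProfile p s ^ (p - 2) = 1 - tanh s ^ 2 := by
  have hp' : p - 2 ≠ 0 := sub_ne_zero.2 hp
  have hcosh := (cosh_pos s).ne'
  rw [solitonProfile, ← rpow_mul (cosh_pos s).le, neg_mul, div_mul_cancel₀ _ hp',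
    rpow_neg (cosh_pos s).le, rpow_two, tanh_eq_sinh_div_cosh, div_pow, sinh_sq]
  field_simp
  ring

lemma solitonProfile_rpow_sub_one (hp : p ≠ 2) (s : ℝ) :
    solitonProfile p s ^ (p - 1) = (1 - tanh s ^ 2) * solitonProfile p s := by
  rw [← solitonProfile_rpow_sub_two hp, ← rpow_add_one (solitonProfile_pos p s).ne']
  ring_nf

lemma solitonProfile_rpow_self (hp : p ≠ 2) (s : ℝ) :
    solitonProfile p s ^ p = (1 - tanh s ^ 2) * solitonProfile p s ^ 2 := by
  rw [← solitonProfile_rpow_sub_two hp, ← rpow_two, ← rpow_add (solitonProfile_pos p s),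
    sub_add_cancel]

lemma hasDerivAt_solitonProfile (p s : ℝ) :
    HasDerivAt (solitonProfile p) (-(2 / (p - 2)) * tanh s * solitonProfile p s) s := by
  have hcosh := (cosh_pos s).ne'
  refine ((hasDerivAt_cosh s).rpow_const (.inl hcosh)).congr_deriv ?_
  rw [rpow_sub_one hcosh, tanh_eq_sinh_div_cosh, solitonProfile]
  ring

lemma deriv_solitonProfile (p : ℝ) :
    deriv (solitonProfile p) = fun s => -(2 / (p - 2)) * tanh s * solitonProfile p s :=
  funext fun s => (hasDerivAt_solitonProfile p s).deriv

lemma deriv_solitonProfile_sq (hp : p ≠ 2) (s : ℝ) :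
    deriv (solitonProfile p) s ^ 2 =
      (2 / (p - 2)) ^ 2 * (solitonProfile p s ^ 2 - solitonProfile p s ^ p) := by
  rw [deriv_solitonProfile, solitonProfile_rpow_self hp]
  ring

lemma hasDerivAt_deriv_solitonProfile (hp : p ≠ 2) (s : ℝ) :
    HasDerivAt (deriv (solitonProfile p))
      ((2 / (p - 2)) ^ 2 * (solitonProfile p s - p / 2 * solitonProfile p s ^ (p - 1))) s := by
  have hp' : p - 2 ≠ 0 := sub_ne_zero.2 hp
  rw [deriv_solitonProfile]
  refine (((hasDerivAt_tanh s).const_mul _).mul (hasDerivAt_solitonProfile p s)).congr_deriv ?_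
  rw [solitonProfile_rpow_sub_one hp]
  field_simp
  ring

lemma hasDerivAt_solitonProfile_mul_deriv (hp : p ≠ 2) (s : ℝ) :
    HasDerivAt (fun s => solitonProfile p s * deriv (solitonProfile p) s)
      ((2 / (p - 2)) ^ 2 *
        (2 * solitonProfile p s ^ 2 - (p + 2) / 2 * solitonProfile p s ^ p)) s := by
  refine ((hasDerivAt_solitonProfile p s).differentiableAt.hasDerivAt.mul
    (hasDerivAt_deriv_solitonProfile hp s)).congr_deriv ?_
  rw [← sq, deriv_solitonProfile_sq hp, solitonProfile_rpow_self hp,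
    solitonProfile_rpow_sub_one hp]
  ring

lemma integrable_solitonProfile_rpow (hp : 2 < p) {q : ℝ} (hq : 0 < q) :
    Integrable fun s => solitonProfile p s ^ q := by
  have hexp : 0 < 2 / (p - 2) * q := mul_pos (div_pos two_pos (sub_pos.2 hp)) hq
  simpa only [solitonProfile, ← rpow_mul (cosh_pos _).le, neg_mul] using
    integrable_cosh_rpow_neg hexp

lemma integrable_solitonProfile_sq (hp : 2 < p) :
    Integrable fun s => solitonProfile p s ^ 2 := by
  simpa only [rpow_two] using integrable_solitonProfile_rpow hp two_pos

lemma integrable_solitonProfile_mul_deriv (hp : 2 < p) :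
    Integrable fun s => solitonProfile p s * deriv (solitonProfile p) s := by
  have htanh : AEStronglyMeasurable tanh :=
    (continuous_iff_continuousAt.2 fun s => (hasDerivAt_tanh s).continuousAt).aestronglyMeasurable
  have h := ((integrable_solitonProfile_sq hp).bdd_mul (c := 1) htanh
    (.of_forall fun s => (abs_tanh_lt_one s).le)).const_mul (-(2 / (p - 2)))
  refine h.congr (.of_forall fun s => ?_)
  simp only [deriv_solitonProfile]
  ring

lemma integral_solitonProfile_sq_pos (hp : 2 < p) : 0 < ∫ s, solitonProfile p s ^ 2 := by
  have hcont : Continuous fun s => solitonProfile p s ^ 2 :=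
    (continuous_iff_continuousAt.2 fun s => (hasDerivAt_solitonProfile p s).continuousAt).pow 2
  exact integral_pos_of_integrable_nonneg_nonzero (x := 0) hcont (integrable_solitonProfile_sq hp)
    (fun s => sq_nonneg _) (pow_pos (solitonProfile_pos p 0) 2).ne'

lemma integral_solitonProfile_rpow_self (hp : 2 < p) :
    ∫ s, solitonProfile p s ^ p = 4 / (p + 2) * ∫ s, solitonProfile p s ^ 2 := by
  have hcoeff : (2 / (p - 2)) ^ 2 ≠ 0 := (pow_pos (div_pos two_pos (sub_pos.2 hp)) 2).ne'
  have hsq_int := (integrable_solitonProfile_sq hp).const_mul 2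
  have hrpow_int :=
    (integrable_solitonProfile_rpow hp (two_pos.trans hp)).const_mul ((p + 2) / 2)
  have hzero := integral_eq_zero_of_hasDerivAt_of_integrable
    (hasDerivAt_solitonProfile_mul_deriv hp.ne') ((hsq_int.sub hrpow_int).const_mul _)
    (integrable_solitonProfile_mul_deriv hp)
  rw [integral_const_mul, integral_sub hsq_int hrpow_int, integral_const_mul, integral_const_mul,
    mul_eq_zero, or_iff_right hcoeff] at hzero
  field_simp
  linarith

lemma integral_deriv_solitonProfile_sq (hp : 2 < p) :
    ∫ s, deriv (solitonProfile p) s ^ 2 =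
      4 / ((p - 2) * (p + 2)) * ∫ s, solitonProfile p s ^ 2 := by
  have hp' : 0 < p - 2 := sub_pos.2 hp
  simp only [deriv_solitonProfile_sq hp.ne']
  rw [integral_const_mul, integral_sub (integrable_solitonProfile_sq hp)
    (integrable_solitonProfile_rpow hp (by linarith)), integral_solitonProfile_rpow_self hp]
  field_simp
  ring

end Profile

section SolitaryWave

variable {p θ η : ℝ}

lemma solitaryWave_amplitude_rpow_sub_two (hp : p ≠ 2) (hη : 0 ≤ p * η / 2) :
    ((p * η / 2) ^ (1 / (p - 2))) ^ (p - 2) = p * η / 2 := by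
  rw [one_div, rpow_inv_rpow hη (sub_ne_zero.2 hp)]

lemma solitaryWave_dilation_sq (p : ℝ) (hη : 0 ≤ η / θ) :
    ((p - 2) / 2 * √(η / θ)) ^ 2 = ((p - 2) / 2) ^ 2 * (η / θ) := by
  rw [mul_pow, sq_sqrt hη]

theorem integral_deriv_solitaryWave_sq_div (hp : 2 < p) (hθ : 0 < θ) (hη : 0 < η) :
    (∫ s, deriv (solitaryWave p θ η) s ^ 2) / ∫ s, solitaryWave p θ η s ^ 2 =
      (p - 2) * η / ((p + 2) * θ) := by
  have hp' : 0 < p - 2 := sub_pos.2 hp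
  have hpos := integral_solitonProfile_sq_pos hp
  unfold solitaryWave
  rw [integral_deriv_sq_div_integral_sq_rescale (by positivity) (by positivity),
    solitaryWave_dilation_sq p (by positivity), integral_deriv_solitonProfile_sq hp,
    mul_div_cancel_right₀ _ hpos.ne']
  field_simp
  norm_num

theorem integral_solitaryWave_rpow_div (hp : 2 < p) (hθ : 0 < θ) (hη : 0 < η) :
    (∫ s, solitaryWave p θ η s ^ p) / ∫ s, solitaryWave p θ η s ^ 2 = 2 * p * η / (p + 2) := by
  have hdilation : 0 < (p - 2) / 2 * √(η / θ) :=
    mul_pos (half_pos (sub_pos.2 hp)) (sqrt_pos.2 (div_pos hη hθ))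
  have hpos := integral_solitonProfile_sq_pos hp
  unfold solitaryWave
  rw [integral_rpow_div_integral_sq_rescale (by positivity) hdilation.ne'
      fun s => (solitonProfile_pos p s).le,
    solitaryWave_amplitude_rpow_sub_two hp.ne' (by positivity),
    integral_solitonProfile_rpow_self hp, mul_div_cancel_right₀ _ hpos.ne']
  field_simp
  ring

theorem solitaryWave_ode (hp : 2 < p) (hθ : 0 < θ) (hη : 0 < η) (s : ℝ) :
    -θ * deriv (deriv (solitaryWave p θ η)) s + η * solitaryWave p θ η s =
      solitaryWave p θ η s ^ (p - 1) := by
  have hp' : 0 < p - 2 := sub_pos.2 hp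
  set A := (p * η / 2) ^ (1 / (p - 2)) with hA
  set B := (p - 2) / 2 * √(η / θ) with hB
  have hA_pos : 0 < A := by positivity
  have hA_pow : A ^ (p - 1) = p * η / 2 * A := by
    rw [← solitaryWave_amplitude_rpow_sub_two hp.ne' (by positivity), ← hA,
      ← rpow_add_one hA_pos.ne']
    ring_nf
  have hB_sq : θ * (2 / (p - 2)) ^ 2 * B ^ 2 = η := by
    rw [hB, solitaryWave_dilation_sq p (by positivity)]
    field_simp
  have hwave : solitaryWave p θ η = fun s => A * solitonProfile p (B * s) := rfl
  simp only [hwave, deriv_rescale, (hasDerivAt_deriv_solitonProfile hp.ne' _).deriv,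
    mul_rpow hA_pos.le (solitonProfile_pos p _).le, hA_pow]
  linear_combination
    -A * (solitonProfile p (B * s) - p / 2 * solitonProfile p (B * s) ^ (p - 1)) * hB_sq

end SolitaryWave

end

theorem statement5_general (p θ Λ : ℝ) (hp : 2 < p) (hpθ : 0 < (2 * θ - 1) * p + 2) (hΛ : 0 < Λ)
    (η A B : ℝ)
    (hη : η = (p + 2) * θ * Λ / ((2 * θ - 1) * p + 2))
    (hA : A = (p * η / 2) ^ (1 / (p - 2)))
    (hB : B = (p - 2) / 2 * Real.sqrt (η / θ))
    (u : ℝ → ℝ) (hu : ∀ s, u s = A * Real.cosh (B * s) ^ (-(2 / (p - 2))))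
    (t : ℝ) (ht : t = (∫ s : ℝ, deriv u s ^ 2) / ∫ s : ℝ, u s ^ 2) :
    t = (p - 2) * Λ / ((2 * θ - 1) * p + 2) ∧
    (∫ s : ℝ, u s ^ p) / (∫ s : ℝ, u s ^ 2) = 2 * p * η / (p + 2) ∧
    (∀ s, -θ * deriv (deriv u) s + ((1 - θ) * t + Λ) * u s = u s ^ (p - 1)) := by
  have hθ : 0 < θ := by nlinarith
  have hη_pos : 0 < η := by rw [hη]; positivity
  obtain rfl : u = solitaryWave p θ η := funext fun s => by rw [hu, hA, hB]; rfl
  have ht_eq : t = (p - 2) * Λ / ((2 * θ - 1) * p + 2) := by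
    rw [ht, integral_deriv_solitaryWave_sq_div hp hθ hη_pos, hη]
    field_simp
  have hη_eq : (1 - θ) * t + Λ = η := by
    rw [ht_eq, hη, ← mul_div_assoc, div_add' _ _ _ hpθ.ne']
    ring
  refine ⟨ht_eq, integral_solitaryWave_rpow_div hp hθ hη_pos, fun s => ?_⟩
  rw [hη_eq]
  exact solitaryWave_ode hp hθ hη_pos s

/-- For `p > 2`, `θ ∈ (0,1]` with `(2θ-1)p+2 > 0` and `Λ > 0`, with
`η = (p+2)θΛ/((2θ-1)p+2)`, `A = (pη/2)^{1/(p-2)}`, `B = ((p-2)/2)√(η/θ)` and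
`u_*(s) = A (cosh(Bs))^{-2/(p-2)}`, one has
(i) `t := ∫ |u_*'|²/∫ u_*² = (p-2)Λ/((2θ-1)p+2)`,
(ii) `∫ u_*^p/∫ u_*² = 2pη/(p+2)`, and
(iii) `-θ u_*'' + ((1-θ)t + Λ) u_* = u_*^{p-1}` on `ℝ`. -/
theorem statement5 (p θ Λ : ℝ) (hp : 2 < p) (hθ0 : 0 < θ) (hθ1 : θ ≤ 1)
    (hpθ : 0 < (2 * θ - 1) * p + 2) (hΛ : 0 < Λ)
    (η A B : ℝ)
    (hη : η = (p + 2) * θ * Λ / ((2 * θ - 1) * p + 2))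
    (hA : A = (p * η / 2) ^ (1 / (p - 2)))
    (hB : B = (p - 2) / 2 * Real.sqrt (η / θ))
    (u : ℝ → ℝ) (hu : ∀ s, u s = A * Real.cosh (B * s) ^ (-(2 / (p - 2))))
    (t : ℝ) (ht : t = (∫ s : ℝ, deriv u s ^ 2) / ∫ s : ℝ, u s ^ 2) :
    t = (p - 2) * Λ / ((2 * θ - 1) * p + 2) ∧
    (∫ s : ℝ, u s ^ p) / (∫ s : ℝ, u s ^ 2) = 2 * p * η / (p + 2) ∧
    (∀ s, -θ * deriv (deriv u) s + ((1 - θ) * t + Λ) * u s = u s ^ (p - 1)) :=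
  statement5_general p θ Λ hp hpθ hΛ η A B hη hA hB u hu t ht
end

section
/- Let p > 2, w(s) = (cosh s)^{-2/(p-2)}, and χ(s) = -((p-2)/(4(p-1))) (2 w(s) - w(s)^{p-1}). Then χ solves -χ'' + (4/(p-2)²) χ - (2p(p-1)/((p-2)² (cosh s)²)) χ - w^{2p-3} = 0 on ℝ. -/
/-!
Put `a = 2 / (p - 2)`, so that `w = cosh ^ (-a)`, `w ^ (p - 1) = cosh ^ (-a - 2)` and
`w ^ (2 * p - 3) = cosh ^ (-a - 4)`. The equation reads `L χ = w ^ (2 * p - 3)` for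
`L f = -f'' + a² f - (a + 1) (a + 2) sech² f`, and `L` maps `cosh ^ m` to a combination of
`cosh ^ m` and `cosh ^ (m - 2)`. For `m = -a` only a multiple of `w ^ (p - 1)` is left; for
`m = -a - 2` there is a multiple of `w ^ (p - 1)` and one of `w ^ (2 * p - 3)`. The combination
`2 w - w ^ (p - 1)` is the one in which the multiples of `w ^ (p - 1)` cancel.
-/

/-- The one-dimensional Schrödinger operator `f ↦ -f'' + E f - V sech² f` with Pöschl–Teller
potential, evaluated at `s`. The value is meaningful only where `f` is twice differentiable. -/
noncomputable def poschlTeller (E V : ℝ) (f : ℝ → ℝ) (s : ℝ) : ℝ :=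
  -iteratedDeriv 2 f s + E * f s - V / Real.cosh s ^ 2 * f s

lemma poschlTeller_const_mul (E V c : ℝ) (f : ℝ → ℝ) (s : ℝ) :
    poschlTeller E V (fun t => c * f t) s = c * poschlTeller E V f s := by
  simp only [poschlTeller, iteratedDeriv_const_mul_field]
  ring

lemma poschlTeller_sub (E V : ℝ) {f g : ℝ → ℝ} {s : ℝ}
    (hf : ContDiffAt ℝ 2 f s) (hg : ContDiffAt ℝ 2 g s) :
    poschlTeller E V (fun t => f t - g t) s = poschlTeller E V f s - poschlTeller E V g s := by
  simp only [poschlTeller, iteratedDeriv_fun_sub hf hg]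
  ring

lemma contDiff_cosh_rpow (m : ℝ) {n : WithTop ℕ∞} : ContDiff ℝ n fun s => Real.cosh s ^ m :=
  Real.contDiff_cosh.rpow_const_of_ne fun s => (Real.cosh_pos s).ne'

lemma hasDerivAt_cosh_rpow (m s : ℝ) :
    HasDerivAt (fun t => Real.cosh t ^ m) (m * (Real.cosh s ^ (m - 1) * Real.sinh s)) s := by
  convert (Real.hasDerivAt_cosh s).rpow_const (p := m) (Or.inl (Real.cosh_pos s).ne') using 1
  ring

lemma hasDerivAt_cosh_rpow_mul_sinh (m s : ℝ) :
    HasDerivAt (fun t => Real.cosh t ^ m * Real.sinh t)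
      ((m + 1) * Real.cosh s ^ (m + 1) - m * Real.cosh s ^ (m - 1)) s := by
  refine ((hasDerivAt_cosh_rpow m s).mul (Real.hasDerivAt_sinh s)).congr_deriv ?_
  have hcosh : Real.cosh s ^ m = Real.cosh s ^ (m - 1) * Real.cosh s := by
    rw [← Real.rpow_add_one (Real.cosh_pos s).ne', sub_add_cancel]
  rw [Real.rpow_add_one (Real.cosh_pos s).ne', hcosh]
  linear_combination m * Real.cosh s ^ (m - 1) * Real.sinh_sq s

lemma iteratedDeriv_two_cosh_rpow (m s : ℝ) :
    iteratedDeriv 2 (fun t => Real.cosh t ^ m) s =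
      m ^ 2 * Real.cosh s ^ m - m * (m - 1) * Real.cosh s ^ (m - 2) := by
  have hderiv : deriv (fun t => Real.cosh t ^ m) =
      fun t => m * (Real.cosh t ^ (m - 1) * Real.sinh t) :=
    funext fun t => (hasDerivAt_cosh_rpow m t).deriv
  rw [iteratedDeriv_succ, iteratedDeriv_one, hderiv,
    ((hasDerivAt_cosh_rpow_mul_sinh (m - 1) s).const_mul m).deriv,
    sub_add_cancel, show m - 1 - 1 = m - 2 by ring]
  ring

lemma poschlTeller_cosh_rpow (E V m s : ℝ) :
    poschlTeller E V (fun t => Real.cosh t ^ m) s =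
      (E - m ^ 2) * Real.cosh s ^ m + (m * (m - 1) - V) * Real.cosh s ^ (m - 2) := by
  have hsech : Real.cosh s ^ m / Real.cosh s ^ 2 = Real.cosh s ^ (m - 2) :=
    (Real.rpow_sub_natCast (Real.cosh_pos s).ne' m 2).symm
  rw [poschlTeller, iteratedDeriv_two_cosh_rpow]
  linear_combination -V * hsech

lemma poschlTeller_two_mul_cosh_rpow_sub (a s : ℝ) :
    poschlTeller (a ^ 2) ((a + 1) * (a + 2))
        (fun t => 2 * Real.cosh t ^ (-a) - Real.cosh t ^ (-a - 2)) s =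
      -(2 * (a + 2)) * Real.cosh s ^ (-a - 4) := by
  rw [poschlTeller_sub _ _ (contDiff_const.mul (contDiff_cosh_rpow _)).contDiffAt
      (contDiff_cosh_rpow _).contDiffAt,
    poschlTeller_const_mul, poschlTeller_cosh_rpow, poschlTeller_cosh_rpow,
    show -a - 2 - 2 = -a - 4 by ring]
  ring

theorem statement10_general (p : ℝ) (hp₁ : p ≠ 1) (hp₂ : p ≠ 2)
    (w : ℝ → ℝ) (hw : ∀ s, w s = Real.cosh s ^ (-(2 / (p - 2))))
    (χ : ℝ → ℝ) (hχ : ∀ s, χ s = -((p - 2) / (4 * (p - 1))) * (2 * w s - w s ^ (p - 1))) :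
    ∀ s, -(deriv (deriv χ) s) + 4 / (p - 2) ^ 2 * χ s -
        2 * p * (p - 1) / ((p - 2) ^ 2 * Real.cosh s ^ 2) * χ s -
        w s ^ (2 * p - 3) = 0 := by
  intro s
  have hp₁' : p - 1 ≠ 0 := sub_ne_zero.2 hp₁
  have hp₂' : p - 2 ≠ 0 := sub_ne_zero.2 hp₂
  set a := 2 / (p - 2) with ha
  have ha_add_two : a + 2 = 2 * (p - 1) / (p - 2) := by rw [ha]; field_simp; ring
  have hw_rpow (q t : ℝ) : w t ^ q = Real.cosh t ^ (-a * q) := by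
    rw [hw, Real.rpow_mul (Real.cosh_pos t).le]
  have hχ_cosh : χ = fun t => -((p - 2) / (4 * (p - 1))) *
      (2 * Real.cosh t ^ (-a) - Real.cosh t ^ (-a - 2)) := by
    funext t
    rw [hχ, hw_rpow, hw, show -a * (p - 1) = -a - 2 by rw [ha]; field_simp; ring]
  have hequation : poschlTeller (a ^ 2) ((a + 1) * (a + 2)) χ s = w s ^ (2 * p - 3) := by
    rw [hχ_cosh, poschlTeller_const_mul, poschlTeller_two_mul_cosh_rpow_sub, hw_rpow,
      show -a * (2 * p - 3) = -a - 4 by rw [ha]; field_simp; ring,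
      ha_add_two]
    field_simp
    ring
  have hV : (a + 1) * (a + 2) = 2 * p * (p - 1) / (p - 2) ^ 2 := by
    rw [ha_add_two, ha]; field_simp; ring
  rw [← hequation, poschlTeller, hV, iteratedDeriv_succ, iteratedDeriv_one, ha, div_pow, div_div]
  ring

/-- For `p > 2`, `w(s) = (cosh s)^{-2/(p-2)}` and
`χ(s) = -((p-2)/(4(p-1)))(2w(s) - w(s)^{p-1})`, the function `χ` solves
`-χ'' + (4/(p-2)²) χ - (2p(p-1)/((p-2)²cosh²s)) χ - w^{2p-3} = 0` on `ℝ`. -/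
theorem statement10 (p : ℝ) (hp : 2 < p)
    (w : ℝ → ℝ) (hw : ∀ s, w s = Real.cosh s ^ (-(2 / (p - 2))))
    (χ : ℝ → ℝ) (hχ : ∀ s, χ s = -((p - 2) / (4 * (p - 1))) * (2 * w s - w s ^ (p - 1))) :
    ∀ s, -(deriv (deriv χ) s) + 4 / (p - 2) ^ 2 * χ s -
        2 * p * (p - 1) / ((p - 2) ^ 2 * Real.cosh s ^ 2) * χ s -
        w s ^ (2 * p - 3) = 0 :=
  statement10_general p (by linarith) hp.ne' w hw χ hχ
end

section
/- For every real p > 2 and every integer d ≥ 2, with U₀(p) = 2p(p-1)/(p-2)², the quantity σ(p,d) = (1/2)√(1 + 4 U₀(p)) - 1/2 - U₀(p) + (2/(p-2)²) (2 + d(p²-4)/(d-1)) satisfies σ(p,d) > 1. -/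
/-!
With `s = p / (p - 2)` one has `U₀ = s * (s + 1)`, so `1 + 4 * U₀ = (2 * s + 1) ^ 2` is a perfect
square and the first three terms of `σ` collapse to `s - s * (s + 1) = -s ^ 2`. The rest then
factors as `σ = (p + 2) / (p - 2) * ((d + 1) / (d - 1))`, a product of two numbers exceeding `1`.
-/

lemma half_sqrt_one_add_four_mul_sub_half {s : ℝ} (hs : -(1 / 2) ≤ s) :
    1 / 2 * √(1 + 4 * (s * (s + 1))) - 1 / 2 = s := by
  have h_square : 1 + 4 * (s * (s + 1)) = (2 * s + 1) ^ 2 := by ring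
  rw [h_square, Real.sqrt_sq (by linarith)]
  ring

lemma two_mul_mul_sub_one_div_sub_two_sq {K : Type*} [Field K] {p : K} (hp : p ≠ 2) :
    2 * p * (p - 1) / (p - 2) ^ 2 = p / (p - 2) * (p / (p - 2) + 1) := by
  have hp' : p - 2 ≠ 0 := sub_ne_zero.mpr hp
  field_simp
  ring

lemma neg_sq_add_eq_mul_div {K : Type*} [Field K] {p d : K} (hp : p ≠ 2) (hd : d ≠ 1) :
    -(p / (p - 2)) ^ 2 + 2 / (p - 2) ^ 2 * (2 + d * (p ^ 2 - 4) / (d - 1)) =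
      (p + 2) / (p - 2) * ((d + 1) / (d - 1)) := by
  have hp' : p - 2 ≠ 0 := sub_ne_zero.mpr hp
  have hd' : d - 1 ≠ 0 := sub_ne_zero.mpr hd
  field_simp
  ring

lemma sigma_eq_mul_div {p d U₀ σ : ℝ} (hp : p ≠ 2) (hs : -(1 / 2) ≤ p / (p - 2)) (hd : d ≠ 1)
    (hU₀ : U₀ = 2 * p * (p - 1) / (p - 2) ^ 2)
    (hσ : σ = 1 / 2 * √(1 + 4 * U₀) - 1 / 2 - U₀ +
      2 / (p - 2) ^ 2 * (2 + d * (p ^ 2 - 4) / (d - 1))) :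
    σ = (p + 2) / (p - 2) * ((d + 1) / (d - 1)) := by
  rw [hσ, hU₀, two_mul_mul_sub_one_div_sub_two_sq hp, half_sqrt_one_add_four_mul_sub_half hs,
    ← neg_sq_add_eq_mul_div hp hd]
  ring

lemma one_lt_add_div_sub {K : Type*} [Field K] [LinearOrder K] [IsStrictOrderedRing K] {a x : K}
    (ha : 0 < a) (hax : a < x) : 1 < (x + a) / (x - a) := by
  rw [one_lt_div (sub_pos.mpr hax)]
  linarith

theorem statement14_general {p d U₀ σ : ℝ} (hp : 2 < p) (hd : 1 < d)
    (hU₀ : U₀ = 2 * p * (p - 1) / (p - 2) ^ 2)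
    (hσ : σ = 1 / 2 * √(1 + 4 * U₀) - 1 / 2 - U₀ +
      2 / (p - 2) ^ 2 * (2 + d * (p ^ 2 - 4) / (d - 1))) :
    1 < σ := by
  have hs : 0 ≤ p / (p - 2) := div_nonneg (by linarith) (by linarith)
  rw [sigma_eq_mul_div hp.ne' (by linarith) hd.ne' hU₀ hσ]
  exact one_lt_mul_of_lt_of_le (one_lt_add_div_sub two_pos hp) (one_lt_add_div_sub one_pos hd).le

/-- For every real `p > 2` and integer `d ≥ 2`, with
`U₀(p) = 2p(p-1)/(p-2)²`, the quantity
`σ(p,d) = (1/2)√(1+4U₀(p)) - 1/2 - U₀(p) + (2/(p-2)²)(2 + d(p²-4)/(d-1))` is larger than `1`. -/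
theorem statement14 (p : ℝ) (hp : 2 < p) (d : ℕ) (hd : 2 ≤ d)
    (U₀ σ : ℝ)
    (hU₀ : U₀ = 2 * p * (p - 1) / (p - 2) ^ 2)
    (hσ : σ = 1 / 2 * Real.sqrt (1 + 4 * U₀) - 1 / 2 - U₀ +
      2 / (p - 2) ^ 2 * (2 + d * (p ^ 2 - 4) / ((d : ℝ) - 1))) :
    1 < σ :=
  statement14_general hp (Nat.one_lt_cast.mpr hd) hU₀ hσ
end

section
/- Let p > 2 and μ > 0, and let u = u_{μ,*} with u_{μ,*}(s) = (p μ / 2)^{1/(p-2)} (cosh(((p-2)/2) √μ s))^{-2/(p-2)}. Then: (i) (∫_ℝ |u'|² ds)/(∫_ℝ u² ds) = (p-2) μ/(p+2); (ii) (∫_ℝ u^p ds)/(∫_ℝ u² ds) = 2 p μ/(p+2); and (iii) (∫_ℝ u² ds)/(∫_ℝ u^p ds)^{2/p} = κ_p μ^{-(p-2)/(2p)}, where κ_p = ((p+2)/4)^{2/p} ( (2√π/(p-2)) Γ(2/(p-2)) / Γ(2/(p-2) + 1/2) )^{(p-2)/p}. -/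
open MeasureTheory

/-!
By the logistic substitution `x = sigmoid t`, Euler's beta integral becomes the integral of
`sigmoid t ^ a * sigmoid (-t) ^ b` over the line. Since `sigmoid t * sigmoid (-t)` is
`(2 * cosh (t / 2)) ^ (-2)`, the case `a = b` evaluates all integrals of negative powers of `cosh`,
hence of all positive powers of the soliton `u`. The functional equation of `Gamma` then gives the
ratio of `∫ u ^ p` to `∫ u ^ 2`, and the conserved energy `u' ^ 2 = μ * u ^ 2 - (2 / p) * u ^ p`
turns this into the ratio of `∫ u' ^ 2` to `∫ u ^ 2`.
-/

section HyperbolicIntegrals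

open Real Set ProbabilityTheory

lemma intervalIntegral_rpow_mul_one_sub_rpow {a b : ℝ} (ha : 0 < a) (hb : 0 < b) :
    ∫ x in (0 : ℝ)..1, x ^ (a - 1) * (1 - x) ^ (b - 1) = beta a b := by
  have ofReal_integral : Complex.betaIntegral a b =
      ((∫ x in (0 : ℝ)..1, x ^ (a - 1) * (1 - x) ^ (b - 1) : ℝ) : ℂ) := by
    rw [Complex.betaIntegral, ← intervalIntegral.integral_ofReal]
    refine intervalIntegral.integral_congr fun x hx ↦ ?_
    rw [uIcc_of_le zero_le_one] at hx
    push_cast [Complex.ofReal_cpow hx.1, Complex.ofReal_cpow (sub_nonneg.2 hx.2)]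
    rfl
  rw [beta_eq_betaIntegralReal a b ha hb, ofReal_integral, Complex.ofReal_re]

lemma integral_sigmoid_rpow_mul_sigmoid_neg_rpow {a b : ℝ} (ha : 0 < a) (hb : 0 < b) :
    ∫ x, sigmoid x ^ a * sigmoid (-x) ^ b = beta a b := by
  rw [← intervalIntegral_rpow_mul_one_sub_rpow ha hb,
    intervalIntegral.integral_of_le zero_le_one, integral_Ioc_eq_integral_Ioo, ← range_sigmoid,
    ← image_univ, integral_image_eq_integral_abs_deriv_smul MeasurableSet.univ
      (fun x _ ↦ (hasDerivAt_sigmoid x).hasDerivWithinAt) sigmoid_injective.injOn, setIntegral_univ]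
  congr with x
  have hx := sigmoid_pos x
  have hx' := sigmoid_pos (-x)
  rw [← sigmoid_neg, abs_of_pos (mul_pos hx hx'), smul_eq_mul, mul_mul_mul_comm,
    mul_comm (sigmoid x), mul_comm (sigmoid (-x)), ← rpow_add_one hx.ne', ← rpow_add_one hx'.ne',
    sub_add_cancel, sub_add_cancel]

lemma sigmoid_mul_sigmoid_neg (x : ℝ) :
    sigmoid x * sigmoid (-x) = ((2 * cosh (x / 2)) ^ 2)⁻¹ := by
  have hx : exp x = exp (x / 2) ^ 2 := by rw [← exp_nat_mul]; congr 1; push_cast; ring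
  rw [sigmoid_def, sigmoid_def, neg_neg, ← mul_inv, cosh_eq, exp_neg, exp_neg, hx]
  field_simp
  ring

lemma beta_self {b : ℝ} (hb : 0 < b) :
    beta b b = 2 ^ (1 - 2 * b) * (√π * Gamma b / Gamma (b + 1 / 2)) := by
  have hΓ := (Gamma_pos_of_pos (by positivity : 0 < 2 * b)).ne'
  have hΓ' := (Gamma_pos_of_pos (by positivity : 0 < b + 1 / 2)).ne'
  rw [beta, ← two_mul, ← mul_div_assoc, div_eq_div_iff hΓ hΓ']
  linear_combination Gamma b * Gamma_mul_Gamma_add_half b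

lemma integral_cosh_rpow_neg {b : ℝ} (hb : 0 < b) :
    ∫ x, cosh x ^ (-(2 * b)) = √π * Gamma b / Gamma (b + 1 / 2) := by
  have sigmoid_rpow (x : ℝ) : sigmoid x ^ b * sigmoid (-x) ^ b =
      2 ^ (-(2 * b)) * cosh (x / 2) ^ (-(2 * b)) := by
    rw [← mul_rpow (sigmoid_nonneg _) (sigmoid_nonneg _), sigmoid_mul_sigmoid_neg,
      ← mul_rpow two_pos.le (cosh_pos _).le, inv_rpow (by positivity), ← rpow_natCast,
      ← rpow_mul (by positivity), ← rpow_neg (by positivity), Nat.cast_two]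
  have h : 2 ^ (1 - 2 * b) * ∫ x, cosh x ^ (-(2 * b)) = beta b b := calc
    _ = 2 ^ (-(2 * b)) * (2 * ∫ x, cosh x ^ (-(2 * b))) := by
      rw [sub_eq_add_neg, rpow_add two_pos, rpow_one]; ring
    _ = ∫ x, sigmoid x ^ b * sigmoid (-x) ^ b := by
      simp_rw [sigmoid_rpow]
      rw [integral_const_mul, Measure.integral_comp_div (fun x ↦ cosh x ^ (-(2 * b))) 2,
        abs_two, smul_eq_mul]
    _ = beta b b := integral_sigmoid_rpow_mul_sigmoid_neg_rpow hb hb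
  rw [beta_self hb] at h
  exact mul_left_cancel₀ (by positivity) h

end HyperbolicIntegrals

section Soliton

open Real

/-- The soliton `u_{μ,*}`, the positive even solution of `u'' + u ^ (p - 1) = μ * u` on the line
that vanishes at infinity (for `2 < p` and `0 < μ`). -/
noncomputable def soliton (p μ s : ℝ) : ℝ :=
  (p * μ / 2) ^ (1 / (p - 2)) * cosh ((p - 2) / 2 * √μ * s) ^ (-(2 / (p - 2)))

/-- The constant `κ_p` in the scaling law of `∫ u ^ 2 / (∫ u ^ p) ^ (2 / p)` for solitons. -/
noncomputable def solitonConstant (p : ℝ) : ℝ :=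
  ((p + 2) / 4) ^ (2 / p) *
    (2 * √π / (p - 2) * Gamma (2 / (p - 2)) / Gamma (2 / (p - 2) + 1 / 2)) ^ ((p - 2) / p)

variable {p μ : ℝ}

lemma soliton_pos (hpμ : 0 < p * μ) (s : ℝ) : 0 < soliton p μ s := by
  have := cosh_pos ((p - 2) / 2 * √μ * s)
  unfold soliton
  positivity

lemma soliton_rpow (hpμ : 0 ≤ p * μ) (r s : ℝ) :
    soliton p μ s ^ r = (p * μ / 2) ^ (r / (p - 2)) *
      cosh ((p - 2) / 2 * √μ * s) ^ (-(2 * (r / (p - 2)))) := by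
  have hc := (cosh_pos ((p - 2) / 2 * √μ * s)).le
  rw [soliton, mul_rpow (by positivity) (by positivity), ← rpow_mul (by positivity), ← rpow_mul hc]
  ring_nf

lemma integral_soliton_rpow (hp : 2 < p) (hμ : 0 < μ) {r : ℝ} (hr : 0 < r) :
    ∫ s, soliton p μ s ^ r = (p * μ / 2) ^ (r / (p - 2)) * (((p - 2) / 2 * √μ)⁻¹ *
      (√π * Gamma (r / (p - 2)) / Gamma (r / (p - 2) + 1 / 2))) := by
  have : 0 < p - 2 := sub_pos.2 hp
  simp_rw [soliton_rpow (by positivity : 0 ≤ p * μ)]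
  rw [integral_const_mul, Measure.integral_comp_mul_left (fun x ↦ cosh x ^ (-(2 * (r / (p - 2))))),
    integral_cosh_rpow_neg (by positivity), smul_eq_mul, abs_of_nonneg (by positivity)]

lemma integral_soliton_rpow_pos (hp : 2 < p) (hμ : 0 < μ) {r : ℝ} (hr : 0 < r) :
    0 < ∫ s, soliton p μ s ^ r := by
  have : 0 < p - 2 := sub_pos.2 hp
  rw [integral_soliton_rpow hp hμ hr]
  positivity

lemma integrable_soliton_rpow (hp : 2 < p) (hμ : 0 < μ) {r : ℝ} (hr : 0 < r) :
    Integrable fun s ↦ soliton p μ s ^ r :=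
  .of_integral_ne_zero (integral_soliton_rpow_pos hp hμ hr).ne'

lemma integral_soliton_rpow_add_sub_two (hp : 2 < p) (hμ : 0 < μ) {r : ℝ} (hr : 0 < r) :
    ∫ s, soliton p μ s ^ (r + (p - 2)) =
      r * p * μ / (2 * r + p - 2) * ∫ s, soliton p μ s ^ r := by
  have hp2 : 0 < p - 2 := sub_pos.2 hp
  have hb : 0 < r / (p - 2) := by positivity
  have hb' : 0 < r / (p - 2) + 1 / 2 := by positivity
  have hratio : p * μ / 2 * (r / (p - 2) / (r / (p - 2) + 1 / 2)) =
      r * p * μ / (2 * r + p - 2) := by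
    have : 2 * r + p - 2 ≠ 0 := by linarith
    field_simp
    ring
  rw [integral_soliton_rpow hp hμ hr, integral_soliton_rpow hp hμ (by positivity), add_div,
    div_self hp2.ne', rpow_add_one (by positivity), Gamma_add_one hb.ne', add_right_comm,
    Gamma_add_one hb'.ne', ← hratio]
  field_simp

lemma integral_soliton_rpow_self (hp : 2 < p) (hμ : 0 < μ) :
    ∫ s, soliton p μ s ^ p = 2 * p * μ / (p + 2) * ∫ s, soliton p μ s ^ 2 := by
  have h := integral_soliton_rpow_add_sub_two hp hμ two_pos
  simp_rw [rpow_two] at h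
  convert h using 3 <;> ring_nf

lemma hasDerivAt_soliton (hp : p ≠ 2) (s : ℝ) :
    HasDerivAt (soliton p μ) (-(√μ * tanh ((p - 2) / 2 * √μ * s) * soliton p μ s)) s := by
  have hc := cosh_pos ((p - 2) / 2 * √μ * s)
  have hp2 : p - 2 ≠ 0 := sub_ne_zero.2 hp
  have h := ((hasDerivAt_const_mul ((p - 2) / 2 * √μ)).cosh.rpow_const (x := s)
    (p := -(2 / (p - 2))) (.inl hc.ne')).const_mul ((p * μ / 2) ^ (1 / (p - 2)))
  refine HasDerivAt.congr_deriv (f := soliton p μ) h ?_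
  rw [soliton, rpow_sub_one hc.ne', tanh_eq_sinh_div_cosh]
  field_simp

lemma deriv_soliton_sq (hp : 2 < p) (hμ : 0 < μ) (s : ℝ) :
    deriv (soliton p μ) s ^ 2 = μ * soliton p μ s ^ 2 - 2 / p * soliton p μ s ^ p := by
  have hp2 : p - 2 ≠ 0 := (sub_pos.2 hp).ne'
  have hpμ : 0 < p * μ := by positivity
  have rpow_sub_two : soliton p μ s ^ (p - 2) =
      p * μ / 2 / cosh ((p - 2) / 2 * √μ * s) ^ 2 := by
    rw [soliton_rpow hpμ.le, div_self hp2, rpow_one, mul_one, rpow_neg (cosh_pos _).le, rpow_two,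
      ← div_eq_mul_inv]
  have rpow_self : soliton p μ s ^ p = soliton p μ s ^ (p - 2) * soliton p μ s ^ 2 := by
    rw [← rpow_two, ← rpow_add (soliton_pos hpμ s), sub_add_cancel]
  rw [(hasDerivAt_soliton hp.ne' s).deriv, rpow_self, rpow_sub_two, neg_sq, mul_pow, mul_pow,
    sq_sqrt hμ.le, tanh_eq_sinh_div_cosh, div_pow, sinh_sq]
  field_simp

lemma integral_deriv_soliton_sq (hp : 2 < p) (hμ : 0 < μ) :
    ∫ s, deriv (soliton p μ) s ^ 2 = (p - 2) * μ / (p + 2) * ∫ s, soliton p μ s ^ 2 := by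
  have hint : Integrable fun s ↦ soliton p μ s ^ 2 := by
    simpa only [rpow_two] using integrable_soliton_rpow hp hμ two_pos
  have hint' : Integrable fun s ↦ soliton p μ s ^ p :=
    integrable_soliton_rpow hp hμ (by positivity)
  simp_rw [deriv_soliton_sq hp hμ]
  rw [integral_sub (hint.const_mul μ) (hint'.const_mul (2 / p)), integral_const_mul,
    integral_const_mul, integral_soliton_rpow_self hp hμ]
  field_simp
  ring

lemma integral_soliton_sq_rpow (hp : 2 < p) (hμ : 0 < μ) :
    (∫ s, soliton p μ s ^ 2) ^ ((p - 2) / p) =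
      (2 * p * μ / (p + 2)) ^ (2 / p) * (solitonConstant p * μ ^ (-((p - 2) / (2 * p)))) := by
  have hp2 : 0 < p - 2 := sub_pos.2 hp
  have integral_sq : ∫ s, soliton p μ s ^ 2 = (p * μ / 2) ^ (2 / (p - 2)) *
      (2 * √π / (p - 2) * Gamma (2 / (p - 2)) / Gamma (2 / (p - 2) + 1 / 2) *
        μ ^ (-(1 / 2) : ℝ)) := by
    have h := integral_soliton_rpow hp hμ two_pos
    simp_rw [rpow_two] at h
    rw [h, rpow_neg hμ.le, ← sqrt_eq_rpow]
    field_simp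
  have hbase : p * μ / 2 = 2 * p * μ / (p + 2) * ((p + 2) / 4) := by field_simp; ring
  rw [integral_sq, mul_rpow (by positivity) (by positivity),
    mul_rpow (by positivity) (by positivity), ← rpow_mul (by positivity), ← rpow_mul hμ.le,
    div_mul_div_cancel₀ hp2.ne', hbase, mul_rpow (by positivity) (by positivity), solitonConstant]
  ring_nf

lemma integral_soliton_sq_div_rpow (hp : 2 < p) (hμ : 0 < μ) :
    (∫ s, soliton p μ s ^ 2) / (∫ s, soliton p μ s ^ p) ^ (2 / p) =
      solitonConstant p * μ ^ (-((p - 2) / (2 * p))) := by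
  have hM : 0 < ∫ s, soliton p μ s ^ 2 := by
    simpa only [rpow_two] using integral_soliton_rpow_pos hp hμ two_pos
  have hexp : (p - 2) / p + 2 / p = 1 := by field_simp; ring
  rw [integral_soliton_rpow_self hp hμ, mul_rpow (by positivity) hM.le,
    div_eq_iff (by positivity)]
  calc ∫ s, soliton p μ s ^ 2
      = (∫ s, soliton p μ s ^ 2) ^ ((p - 2) / p) * (∫ s, soliton p μ s ^ 2) ^ (2 / p) := by
        rw [← rpow_add hM, hexp, rpow_one]
    _ = _ := by rw [integral_soliton_sq_rpow hp hμ]; ring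

end Soliton

/-- For `p > 2`, `μ > 0` and `u = u_{μ,*}` as in the paper:
(i) `∫ |u'|² / ∫ u² = (p-2)μ/(p+2)`;
(ii) `∫ u^p / ∫ u² = 2pμ/(p+2)`;
(iii) `∫ u² / (∫ u^p)^{2/p} = κ_p μ^{-(p-2)/(2p)}` with the explicit constant `κ_p`. -/
theorem statement16 (p μ : ℝ) (hp : 2 < p) (hμ : 0 < μ)
    (u : ℝ → ℝ)
    (hu : ∀ s, u s = (p * μ / 2) ^ (1 / (p - 2)) *
      Real.cosh ((p - 2) / 2 * Real.sqrt μ * s) ^ (-(2 / (p - 2))))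
    (κ : ℝ)
    (hκ : κ = ((p + 2) / 4) ^ (2 / p) *
      (2 * Real.sqrt Real.pi / (p - 2) * Real.Gamma (2 / (p - 2)) /
        Real.Gamma (2 / (p - 2) + 1 / 2)) ^ ((p - 2) / p)) :
    (∫ s : ℝ, deriv u s ^ 2) / (∫ s : ℝ, u s ^ 2) = (p - 2) * μ / (p + 2) ∧
    (∫ s : ℝ, u s ^ p) / (∫ s : ℝ, u s ^ 2) = 2 * p * μ / (p + 2) ∧
    (∫ s : ℝ, u s ^ 2) / (∫ s : ℝ, u s ^ p) ^ (2 / p) =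
      κ * μ ^ (-((p - 2) / (2 * p))) := by
  obtain rfl : u = soliton p μ := funext hu
  have hM : ∫ s, soliton p μ s ^ 2 ≠ 0 := by
    simpa only [Real.rpow_two] using (integral_soliton_rpow_pos hp hμ two_pos).ne'
  refine ⟨?_, ?_, ?_⟩
  · rw [integral_deriv_soliton_sq hp hμ, mul_div_cancel_right₀ _ hM]
  · rw [integral_soliton_rpow_self hp hμ, mul_div_cancel_right₀ _ hM]
  · rw [integral_soliton_sq_div_rpow hp hμ, hκ, solitonConstant]
end

section
/- Let d ≥ 3 be an integer. Define b_FS(p,d) = 4(d-1)² p³ (p-1)² (2p(5p-6) - d(p² - 16p + 12)) / ( (d+2)(p+2)²(p-2)(3p-2)²(5p-6) ), y(p,d) = 16 p (p-1)(3p-4) / ( (3p-2)(5p-6)(7p-10) σ(p,d) ), and L_approx(p,d) = 4(d-1)² ( (p-1)p³/(p+2)² ) ( (p-2)p/((3p-2)²(5p-6)) + 2((d-1)/(d+2)) ((p-1)/(p-2)²) y(p,d) ), where σ(p,d) = (1/2)√(1 + 4 U₀(p)) - 1/2 - U₀(p) + (2/(p-2)²)(2 + d(p²-4)/(d-1)) and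 U₀(p) = 2p(p-1)/(p-2)². Then there exists p̄ ∈ (2, 2d/(d-2)) such that for every p ∈ (2, p̄), 2 b_FS(p,d) - L_approx(p,d) > 0. -/
/-!
As `p → 2⁺` both `b_FS` and `L_approx` have a simple pole. With `ν = p / (p - 2)` one has
`U₀ = ν (ν + 1)`, so the square root in `σ` disappears and
`σ = (d + 1) (p + 2) / ((d - 1) (p - 2))`; hence `y` vanishes to first order at `p = 2`. Comparing
residues, `(p - 2) (2 b_FS - L_approx)` tends to
`(d - 1)² ((d + 1)² - (d - 1)²) / ((d + 1) (d + 2)) = 4 d (d - 1)² / ((d + 1) (d + 2)) > 0`.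
-/

open Filter Set Topology

/-- `U₀(p)`, the depth of the Pöschl–Teller well `-U₀(p) / cosh²`. -/
noncomputable def wellDepth (p : ℝ) : ℝ :=
  2 * p * (p - 1) / (p - 2) ^ 2

/-- `σ(p, d)`, the ground state energy of the Pöschl–Teller well of depth `U₀(p)`, shifted by a
constant. For `U₀ = ν (ν + 1)` that energy is `-ν²`, written as `ν - U₀` with
`ν = √(1 + 4 U₀) / 2 - 1 / 2`. -/
noncomputable def shiftedGroundEnergy (d p : ℝ) : ℝ :=
  1 / 2 * √(1 + 4 * wellDepth p) - 1 / 2 - wellDepth p +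
    2 / (p - 2) ^ 2 * (2 + d * (p ^ 2 - 4) / (d - 1))

/-- The quantity `b_FS(p, d)`, twice which is compared with `L_approx(p, d)`. -/
noncomputable def bFSValue (d p : ℝ) : ℝ :=
  4 * (d - 1) ^ 2 * p ^ 3 * (p - 1) ^ 2 * (2 * p * (5 * p - 6) - d * (p ^ 2 - 16 * p + 12)) /
    ((d + 2) * (p + 2) ^ 2 * (p - 2) * (3 * p - 2) ^ 2 * (5 * p - 6))

/-- The factor `y(p, d)` of the second term of `L_approx(p, d)`. -/
noncomputable def yFactor (d p : ℝ) : ℝ :=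
  16 * p * (p - 1) * (3 * p - 4) /
    ((3 * p - 2) * (5 * p - 6) * (7 * p - 10) * shiftedGroundEnergy d p)

/-- The quantity `L_approx(p, d)`, built from `y(p, d)`. -/
noncomputable def lApproxValue (d p : ℝ) : ℝ :=
  4 * (d - 1) ^ 2 * ((p - 1) * p ^ 3 / (p + 2) ^ 2) *
    ((p - 2) * p / ((3 * p - 2) ^ 2 * (5 * p - 6)) +
      2 * ((d - 1) / (d + 2)) * ((p - 1) / (p - 2) ^ 2) * yFactor d p)

lemma exists_mem_Ioo_forall_Ioo_of_eventually_nhdsGT {α : Type*} [LinearOrder α]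
    [TopologicalSpace α] [OrderTopology α] [DenselyOrdered α] {a b : α} {P : α → Prop}
    (hab : a < b) (hP : ∀ᶠ x in 𝓝[>] a, P x) : ∃ c ∈ Ioo a b, ∀ x ∈ Ioo a c, P x := by
  obtain ⟨u, hau, hub⟩ := exists_between hab
  obtain ⟨c, hc, hcP⟩ := (mem_nhdsGT_iff_exists_mem_Ioc_Ioo_subset hau).1 hP
  exact ⟨c, ⟨hc.1, hc.2.trans_lt hub⟩, hcP⟩

lemma half_sqrt_sub_half_sub_eq_neg_sq {ν : ℝ} (hν : -1 / 2 ≤ ν) :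
    1 / 2 * √(1 + 4 * (ν * (ν + 1))) - 1 / 2 - ν * (ν + 1) = -ν ^ 2 := by
  have hsqrt : √(1 + 4 * (ν * (ν + 1))) = 2 * ν + 1 := by
    rw [show 1 + 4 * (ν * (ν + 1)) = (2 * ν + 1) ^ 2 by ring]
    exact Real.sqrt_sq (by linarith)
  rw [hsqrt]
  ring

lemma wellDepth_eq_mul_add_one {p : ℝ} (hp : p ≠ 2) :
    wellDepth p = p / (p - 2) * (p / (p - 2) + 1) := by
  have hp' : p - 2 ≠ 0 := sub_ne_zero.2 hp
  rw [wellDepth]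
  field_simp
  ring

lemma shiftedGroundEnergy_eq_div {d p : ℝ} (hd : d ≠ 1) (hp : 2 < p) :
    shiftedGroundEnergy d p = (d + 1) * (p + 2) / ((d - 1) * (p - 2)) := by
  have hd' : d - 1 ≠ 0 := sub_ne_zero.2 hd
  have hp' : 0 < p - 2 := sub_pos.2 hp
  have hν : 0 ≤ p / (p - 2) := by positivity
  rw [shiftedGroundEnergy, wellDepth_eq_mul_add_one hp.ne',
    half_sqrt_sub_half_sub_eq_neg_sq (by linarith)]
  field_simp
  ring

lemma tendsto_yFactor_div_sub_two {d : ℝ} (hd : d ≠ 1) (hd' : d ≠ -1) :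
    Tendsto (fun p ↦ yFactor d p / (p - 2)) (𝓝[>] 2) (𝓝 ((d - 1) / (4 * (d + 1)))) := by
  have hd_sub : d - 1 ≠ 0 := sub_ne_zero.2 hd
  have hd_add : d + 1 ≠ 0 := by rwa [Ne, add_eq_zero_iff_eq_neg]
  let g : ℝ → ℝ := fun p ↦ (d - 1) * (16 * p * (p - 1) * (3 * p - 4)) /
    ((3 * p - 2) * (5 * p - 6) * (7 * p - 10) * ((d + 1) * (p + 2)))
  have hg : ContinuousAt g 2 := .div (by fun_prop) (by fun_prop) (by norm_num [hd_add])
  have hval : g 2 = (d - 1) / (4 * (d + 1)) := by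
    simp only [g]
    field_simp
    norm_num
  refine tendsto_nhdsWithin_congr (fun p hp ↦ ?_) (hval ▸ hg.tendsto.mono_left nhdsWithin_le_nhds)
  have hp' : p - 2 ≠ 0 := (sub_pos.2 hp).ne'
  simp only [g]
  rw [yFactor, shiftedGroundEnergy_eq_div hd hp]
  field_simp

lemma tendsto_sub_two_mul_bFSValue {d : ℝ} (hd : d ≠ -2) :
    Tendsto (fun p ↦ (p - 2) * bFSValue d p) (𝓝[>] 2)
      (𝓝 ((d - 1) ^ 2 * (d + 1) / (2 * (d + 2)))) := by
  have hd_add : d + 2 ≠ 0 := by rwa [Ne, add_eq_zero_iff_eq_neg]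
  let g : ℝ → ℝ := fun p ↦
    4 * (d - 1) ^ 2 * p ^ 3 * (p - 1) ^ 2 * (2 * p * (5 * p - 6) - d * (p ^ 2 - 16 * p + 12)) /
      ((d + 2) * (p + 2) ^ 2 * (3 * p - 2) ^ 2 * (5 * p - 6))
  have hg : ContinuousAt g 2 := .div (by fun_prop) (by fun_prop) (by norm_num [hd_add])
  have hval : g 2 = (d - 1) ^ 2 * (d + 1) / (2 * (d + 2)) := by
    simp only [g]
    field_simp
    ring
  refine tendsto_nhdsWithin_congr (fun p hp ↦ ?_) (hval ▸ hg.tendsto.mono_left nhdsWithin_le_nhds)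
  have hp' : p - 2 ≠ 0 := (sub_pos.2 hp).ne'
  simp only [g, bFSValue]
  field_simp

lemma tendsto_sub_two_mul_lApproxValue {d : ℝ} (hd : d ≠ 1) (hd' : d ≠ -1) :
    Tendsto (fun p ↦ (p - 2) * lApproxValue d p) (𝓝[>] 2)
      (𝓝 ((d - 1) ^ 4 / ((d + 1) * (d + 2)))) := by
  let A : ℝ → ℝ := fun p ↦ 4 * (d - 1) ^ 2 * ((p - 1) * p ^ 3 / (p + 2) ^ 2)
  let B : ℝ → ℝ := fun p ↦ (p - 2) ^ 2 * p / ((3 * p - 2) ^ 2 * (5 * p - 6))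
  let C : ℝ → ℝ := fun p ↦ 2 * ((d - 1) / (d + 2)) * (p - 1)
  have hA : ContinuousAt A 2 :=
    .mul (by fun_prop) (.div (by fun_prop) (by fun_prop) (by norm_num))
  have hB : ContinuousAt B 2 := .div (by fun_prop) (by fun_prop) (by norm_num)
  have hC : ContinuousAt C 2 := by fun_prop
  have hlim : Tendsto (fun p ↦ A p * (B p + C p * (yFactor d p / (p - 2)))) (𝓝[>] 2)
      (𝓝 (A 2 * (B 2 + C 2 * ((d - 1) / (4 * (d + 1)))))) :=
    (hA.mono_left nhdsWithin_le_nhds).mul <| (hB.mono_left nhdsWithin_le_nhds).add <|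
      (hC.mono_left nhdsWithin_le_nhds).mul (tendsto_yFactor_div_sub_two hd hd')
  have hval : A 2 * (B 2 + C 2 * ((d - 1) / (4 * (d + 1)))) =
      (d - 1) ^ 4 / ((d + 1) * (d + 2)) := by
    simp only [A, B, C, div_eq_mul_inv, mul_inv]
    ring
  refine tendsto_nhdsWithin_congr (fun p hp ↦ ?_) (hval ▸ hlim)
  have hp' : p - 2 ≠ 0 := (sub_pos.2 hp).ne'
  simp only [A, B, C, lApproxValue]
  field_simp

lemma tendsto_sub_two_mul_two_mul_bFSValue_sub_lApproxValue {d : ℝ} (hd₁ : d ≠ 1)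
    (hd₂ : d ≠ -1) (hd₃ : d ≠ -2) :
    Tendsto (fun p ↦ (p - 2) * (2 * bFSValue d p - lApproxValue d p)) (𝓝[>] 2)
      (𝓝 (4 * d * (d - 1) ^ 2 / ((d + 1) * (d + 2)))) := by
  have hd_add_one : d + 1 ≠ 0 := by rwa [Ne, add_eq_zero_iff_eq_neg]
  have hd_add_two : d + 2 ≠ 0 := by rwa [Ne, add_eq_zero_iff_eq_neg]
  convert ((tendsto_sub_two_mul_bFSValue hd₃).const_mul 2).sub
    (tendsto_sub_two_mul_lApproxValue hd₁ hd₂) using 2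
  · ring
  · field_simp
    ring

theorem statement19_general {d : ℝ} (hd : 0 < d) (hd₁ : d ≠ 1) :
    ∀ᶠ p in 𝓝[>] 2, 0 < 2 * bFSValue d p - lApproxValue d p := by
  have : d - 1 ≠ 0 := sub_ne_zero.2 hd₁
  have hlim_pos : 0 < 4 * d * (d - 1) ^ 2 / ((d + 1) * (d + 2)) := by positivity
  have hlim := tendsto_sub_two_mul_two_mul_bFSValue_sub_lApproxValue hd₁
    (by linarith) (by linarith)
  filter_upwards [hlim.eventually_const_lt hlim_pos, self_mem_nhdsWithin] with p hpos hp
  exact pos_of_mul_pos_right hpos (sub_pos.2 hp).le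

/-- For every integer `d ≥ 3`, with the explicit quantities
`U₀(p) = 2p(p-1)/(p-2)²`,
`σ(p,d) = (1/2)√(1+4U₀(p)) - 1/2 - U₀(p) + (2/(p-2)²)(2 + d(p²-4)/(d-1))`,
`b_FS(p,d)`, `y(p,d)` and `L_approx(p,d)` as in the paper, there exists
`p̄ ∈ (2, 2d/(d-2))` such that `2 b_FS(p,d) - L_approx(p,d) > 0` for all `p ∈ (2, p̄)`. -/
theorem statement19 (d : ℕ) (hd : 3 ≤ d)
    (U₀ σ bFS y Lapprox : ℝ → ℝ)
    (hU₀ : ∀ p, U₀ p = 2 * p * (p - 1) / (p - 2) ^ 2)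
    (hσ : ∀ p, σ p = 1 / 2 * Real.sqrt (1 + 4 * U₀ p) - 1 / 2 - U₀ p +
      2 / (p - 2) ^ 2 * (2 + (d : ℝ) * (p ^ 2 - 4) / ((d : ℝ) - 1)))
    (hbFS : ∀ p, bFS p = 4 * ((d : ℝ) - 1) ^ 2 * p ^ 3 * (p - 1) ^ 2 *
      (2 * p * (5 * p - 6) - (d : ℝ) * (p ^ 2 - 16 * p + 12)) /
      (((d : ℝ) + 2) * (p + 2) ^ 2 * (p - 2) * (3 * p - 2) ^ 2 * (5 * p - 6)))
    (hy : ∀ p, y p = 16 * p * (p - 1) * (3 * p - 4) /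
      ((3 * p - 2) * (5 * p - 6) * (7 * p - 10) * σ p))
    (hL : ∀ p, Lapprox p = 4 * ((d : ℝ) - 1) ^ 2 * ((p - 1) * p ^ 3 / (p + 2) ^ 2) *
      ((p - 2) * p / ((3 * p - 2) ^ 2 * (5 * p - 6)) +
        2 * (((d : ℝ) - 1) / ((d : ℝ) + 2)) * ((p - 1) / (p - 2) ^ 2) * y p)) :
    ∃ pbar : ℝ, pbar ∈ Set.Ioo (2 : ℝ) (2 * (d : ℝ) / ((d : ℝ) - 2)) ∧
      ∀ p ∈ Set.Ioo (2 : ℝ) pbar, 0 < 2 * bFS p - Lapprox p := by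
  have hd' : (3 : ℝ) ≤ d := by exact_mod_cast hd
  have hlt : 2 < 2 * (d : ℝ) / (d - 2) := by
    rw [lt_div_iff₀ (by linarith)]
    linarith
  have hpos := statement19_general (d := d) (by linarith) (by linarith)
  simp only [bFSValue, lApproxValue, yFactor, shiftedGroundEnergy, wellDepth] at hpos
  simpa only [hbFS, hL, hy, hσ, hU₀] using
    exists_mem_Ioo_forall_Ioo_of_eventually_nhdsGT hlt hpos
end
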